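/- arXiv:1908.00514 — 5 statements merged into one kernel-verified Lean document; each statement's English description precedes it below -/
import Mathlib

section
/- Let (J, v, π) be a classical solution of (E1)–(E3) on [0,L]×[0,T] with boundary condition v(0,t) = v(L,t) = 0. Then the function t ↦ ∫₀ᴸ ( ρ₀(y) v(y,t)²/2 + J(y,t) π(y,t)/(γ−1) ) dy is constant on [0,T]; in particular it equals ∫₀ᴸ ( ρ₀ v₀²/2 + J₀ π₀/(γ−1) ) dy for every t ∈ [0,T]. -/
open Set MeasureTheory

/-- A classical solution `(J, v, π)` of the Lagrangian 1D non-heat-conductive compressible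
Navier–Stokes system (E1)–(E3) on `[0,L] × [0,T]`, together with its partial derivatives
`Jt = ∂ₜJ`, `vy = ∂_y v`, `vt = ∂ₜv`, `w = ∂_y((∂_y v)/J)`, `πy = ∂_y π`, `πt = ∂ₜπ`,
all continuous on `[0,L] × [0,T]`, and `J > 0` everywhere. -/
structure ClassicalSolution (L T μ γ : ℝ) (ρ₀ : ℝ → ℝ)
    (J v π Jt vy vt w πy πt : ℝ → ℝ → ℝ) : Prop where
  Jpos : ∀ y ∈ Set.Icc (0:ℝ) L, ∀ t ∈ Set.Icc (0:ℝ) T, 0 < J y t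
  contJ : ContinuousOn (fun p : ℝ × ℝ => J p.1 p.2) (Set.Icc 0 L ×ˢ Set.Icc 0 T)
  contv : ContinuousOn (fun p : ℝ × ℝ => v p.1 p.2) (Set.Icc 0 L ×ˢ Set.Icc 0 T)
  contPi : ContinuousOn (fun p : ℝ × ℝ => π p.1 p.2) (Set.Icc 0 L ×ˢ Set.Icc 0 T)
  hJt : ∀ y ∈ Set.Icc (0:ℝ) L, ∀ t ∈ Set.Icc (0:ℝ) T,
    HasDerivWithinAt (fun s => J y s) (Jt y t) (Set.Icc 0 T) t
  hvy : ∀ y ∈ Set.Icc (0:ℝ) L, ∀ t ∈ Set.Icc (0:ℝ) T,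
    HasDerivWithinAt (fun x => v x t) (vy y t) (Set.Icc 0 L) y
  hvt : ∀ y ∈ Set.Icc (0:ℝ) L, ∀ t ∈ Set.Icc (0:ℝ) T,
    HasDerivWithinAt (fun s => v y s) (vt y t) (Set.Icc 0 T) t
  hw : ∀ y ∈ Set.Icc (0:ℝ) L, ∀ t ∈ Set.Icc (0:ℝ) T,
    HasDerivWithinAt (fun x => vy x t / J x t) (w y t) (Set.Icc 0 L) y
  hPiy : ∀ y ∈ Set.Icc (0:ℝ) L, ∀ t ∈ Set.Icc (0:ℝ) T,
    HasDerivWithinAt (fun x => π x t) (πy y t) (Set.Icc 0 L) y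
  hPit : ∀ y ∈ Set.Icc (0:ℝ) L, ∀ t ∈ Set.Icc (0:ℝ) T,
    HasDerivWithinAt (fun s => π y s) (πt y t) (Set.Icc 0 T) t
  contJt : ContinuousOn (fun p : ℝ × ℝ => Jt p.1 p.2) (Set.Icc 0 L ×ˢ Set.Icc 0 T)
  contvy : ContinuousOn (fun p : ℝ × ℝ => vy p.1 p.2) (Set.Icc 0 L ×ˢ Set.Icc 0 T)
  contvt : ContinuousOn (fun p : ℝ × ℝ => vt p.1 p.2) (Set.Icc 0 L ×ˢ Set.Icc 0 T)
  contw : ContinuousOn (fun p : ℝ × ℝ => w p.1 p.2) (Set.Icc 0 L ×ˢ Set.Icc 0 T)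
  contPiy : ContinuousOn (fun p : ℝ × ℝ => πy p.1 p.2) (Set.Icc 0 L ×ˢ Set.Icc 0 T)
  contPit : ContinuousOn (fun p : ℝ × ℝ => πt p.1 p.2) (Set.Icc 0 L ×ˢ Set.Icc 0 T)
  eq1 : ∀ y ∈ Set.Icc (0:ℝ) L, ∀ t ∈ Set.Icc (0:ℝ) T, Jt y t = vy y t
  eq2 : ∀ y ∈ Set.Icc (0:ℝ) L, ∀ t ∈ Set.Icc (0:ℝ) T,
    ρ₀ y * vt y t - μ * w y t + πy y t = 0
  eq3 : ∀ y ∈ Set.Icc (0:ℝ) L, ∀ t ∈ Set.Icc (0:ℝ) T,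
    πt y t + γ * (vy y t / J y t) * π y t = μ * (γ - 1) * (vy y t / J y t) ^ 2

/-! Write `σ = μ v_y / J - π` for the stress. Multiplying (E2) by `v`, and (E3) by `J / (γ - 1)`,
and using `J_t = v_y`, one finds the local balance law `∂ₜ(ρ₀ v² / 2 + J π / (γ - 1)) = ∂_y(v σ)`.
Integrated over a space-time rectangle, it equates the change of energy with the power of the stress
at the endpoints, which vanishes where `v` does. -/

section BalanceLaw

variable {E : Type*} [NormedAddCommGroup E] [NormedSpace ℝ E] [CompleteSpace E]

theorem integral_eq_sub_of_hasDerivWithinAt_uIcc {a b : ℝ} {f f' : ℝ → E}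
    (hderiv : ∀ x ∈ uIcc a b, HasDerivWithinAt f (f' x) (uIcc a b) x)
    (hint : IntervalIntegrable f' volume a b) :
    ∫ x in a..b, f' x = f b - f a :=
  intervalIntegral.integral_eq_sub_of_hasDeriv_right
    (fun x hx => (hderiv x hx).continuousWithinAt)
    (fun x hx => ((hderiv x (Ioo_subset_Icc_self hx)).hasDerivAt
      (Icc_mem_nhds hx.1 hx.2)).hasDerivWithinAt)
    hint

theorem integral_sub_integral_eq_integral_flux_sub {a b s t : ℝ} {e F g : ℝ → ℝ → E}
    (hg : ContinuousOn (Function.uncurry g) (uIcc a b ×ˢ uIcc s t))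
    (hderiv_e : ∀ y ∈ uIcc a b, ∀ τ ∈ uIcc s t, HasDerivWithinAt (e y) (g y τ) (uIcc s t) τ)
    (hderiv_F : ∀ y ∈ uIcc a b, ∀ τ ∈ uIcc s t,
      HasDerivWithinAt (fun x => F x τ) (g y τ) (uIcc a b) y)
    (hint_s : IntervalIntegrable (fun y => e y s) volume a b)
    (hint_t : IntervalIntegrable (fun y => e y t) volume a b) :
    (∫ y in a..b, e y t) - ∫ y in a..b, e y s = ∫ τ in s..t, (F b τ - F a τ) := by
  have hg_int : IntegrableOn (Function.uncurry g) (uIoc a b ×ˢ uIoc s t) :=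
    (hg.integrableOn_compact (isCompact_uIcc.prod isCompact_uIcc)).mono_set
      (prod_mono uIoc_subset_uIcc uIoc_subset_uIcc)
  calc (∫ y in a..b, e y t) - ∫ y in a..b, e y s
      = ∫ y in a..b, (e y t - e y s) := (intervalIntegral.integral_sub hint_t hint_s).symm
    _ = ∫ y in a..b, ∫ τ in s..t, g y τ := intervalIntegral.integral_congr fun y hy =>
        (integral_eq_sub_of_hasDerivWithinAt_uIcc (hderiv_e y hy)
          (hg.uncurry_left y hy).intervalIntegrable).symm
    _ = ∫ τ in s..t, ∫ y in a..b, g y τ := intervalIntegral_intervalIntegral_swap hg_int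
    _ = ∫ τ in s..t, (F b τ - F a τ) := intervalIntegral.integral_congr fun τ hτ =>
        integral_eq_sub_of_hasDerivWithinAt_uIcc (fun y hy => hderiv_F y hy τ hτ)
          (hg.uncurry_right τ hτ).intervalIntegrable

end BalanceLaw

/-- The total energy per unit of Lagrangian length: the kinetic energy `ρ₀ v² / 2` plus the internal
energy `J π / (γ - 1)`. -/
noncomputable def energyDensity (γ : ℝ) (ρ₀ : ℝ → ℝ) (J v π : ℝ → ℝ → ℝ) (y t : ℝ) : ℝ :=
  ρ₀ y * v y t ^ 2 / 2 + J y t * π y t / (γ - 1)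

/-- The power `v σ` of the stress `σ = μ v_y / J - π`, with `vy` standing for `∂_y v`. It is the
flux of energy towards decreasing `y`. -/
noncomputable def stressPower (μ : ℝ) (J v π vy : ℝ → ℝ → ℝ) (y t : ℝ) : ℝ :=
  v y t * (μ * (vy y t / J y t) - π y t)

/-- The derivative `v_y σ + v σ_y` of `stressPower` in `y`, with `w` standing for `∂_y(v_y / J)` and
`πy` for `∂_y π`. -/
noncomputable def stressPowerDeriv (μ : ℝ) (J v π vy w πy : ℝ → ℝ → ℝ) (y t : ℝ) : ℝ :=
  vy y t * (μ * (vy y t / J y t) - π y t) + v y t * (μ * w y t - πy y t)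

namespace ClassicalSolution

variable {L T μ γ : ℝ} {ρ₀ : ℝ → ℝ} {J v π Jt vy vt w πy πt : ℝ → ℝ → ℝ}

theorem continuousOn_stressPowerDeriv
    (hsol : ClassicalSolution L T μ γ ρ₀ J v π Jt vy vt w πy πt) :
    ContinuousOn (Function.uncurry (stressPowerDeriv μ J v π vy w πy)) (Icc 0 L ×ˢ Icc 0 T) := by
  have hstrain : ContinuousOn (fun p : ℝ × ℝ => vy p.1 p.2 / J p.1 p.2) (Icc 0 L ×ˢ Icc 0 T) :=
    hsol.contvy.div hsol.contJ fun p hp => (hsol.Jpos p.1 hp.1 p.2 hp.2).ne'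
  exact (hsol.contvy.mul ((hstrain.const_mul μ).sub hsol.contPi)).add
    (hsol.contv.mul ((hsol.contw.const_mul μ).sub hsol.contPiy))

theorem hasDerivWithinAt_stressPower
    (hsol : ClassicalSolution L T μ γ ρ₀ J v π Jt vy vt w πy πt)
    {y t : ℝ} (hy : y ∈ Icc 0 L) (ht : t ∈ Icc 0 T) :
    HasDerivWithinAt (fun x => stressPower μ J v π vy x t)
      (stressPowerDeriv μ J v π vy w πy y t) (Icc 0 L) y :=
  (hsol.hvy y hy t ht).mul (((hsol.hw y hy t ht).const_mul μ).sub (hsol.hPiy y hy t ht))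

theorem timeDeriv_energyDensity_eq
    (hsol : ClassicalSolution L T μ γ ρ₀ J v π Jt vy vt w πy πt)
    (hγ : γ ≠ 1) {y t : ℝ} (hy : y ∈ Icc 0 L) (ht : t ∈ Icc 0 T) :
    ρ₀ y * v y t * vt y t + (Jt y t * π y t + J y t * πt y t) / (γ - 1) =
      stressPowerDeriv μ J v π vy w πy y t := by
  have hγ' : γ - 1 ≠ 0 := sub_ne_zero.mpr hγ
  have hJ : J y t ≠ 0 := (hsol.Jpos y hy t ht).ne'
  have kinetic : ρ₀ y * v y t * vt y t = v y t * (μ * w y t - πy y t) := by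
    linear_combination v y t * hsol.eq2 y hy t ht
  have internal : (Jt y t * π y t + J y t * πt y t) / (γ - 1) =
      vy y t * (μ * (vy y t / J y t) - π y t) := by
    have hπt : πt y t = μ * (γ - 1) * (vy y t / J y t) ^ 2 - γ * (vy y t / J y t) * π y t :=
      eq_sub_of_add_eq (hsol.eq3 y hy t ht)
    rw [hsol.eq1 y hy t ht, hπt]
    field_simp
    ring
  rw [kinetic, internal, stressPowerDeriv, add_comm]

theorem hasDerivWithinAt_energyDensity
    (hsol : ClassicalSolution L T μ γ ρ₀ J v π Jt vy vt w πy πt)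
    (hγ : γ ≠ 1) {y t : ℝ} (hy : y ∈ Icc 0 L) (ht : t ∈ Icc 0 T) :
    HasDerivWithinAt (energyDensity γ ρ₀ J v π y)
      (stressPowerDeriv μ J v π vy w πy y t) (Icc 0 T) t := by
  have hkinetic := (((hsol.hvt y hy t ht).pow 2).const_mul (ρ₀ y)).div_const 2
  have hinternal := ((hsol.hJt y hy t ht).mul (hsol.hPit y hy t ht)).div_const (γ - 1)
  refine (hkinetic.add hinternal).congr_deriv ?_
  rw [← hsol.timeDeriv_energyDensity_eq hγ hy ht]
  push_cast
  ring

theorem intervalIntegrable_energyDensity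
    (hsol : ClassicalSolution L T μ γ ρ₀ J v π Jt vy vt w πy πt)
    (hL : 0 ≤ L) (hρ₀ : IntervalIntegrable ρ₀ volume 0 L) {t : ℝ} (ht : t ∈ Icc 0 T) :
    IntervalIntegrable (fun y => energyDensity γ ρ₀ J v π y t) volume 0 L := by
  have slice {f : ℝ → ℝ → ℝ} (hf : ContinuousOn (Function.uncurry f) (Icc 0 L ×ˢ Icc 0 T)) :
      ContinuousOn (fun y => f y t) (uIcc 0 L) := by
    rw [uIcc_of_le hL]
    exact hf.uncurry_right t ht
  exact ((hρ₀.mul_continuousOn ((slice hsol.contv).pow 2)).div_const 2).add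
    (((slice hsol.contJ).mul (slice hsol.contPi)).intervalIntegrable.div_const (γ - 1))

theorem integral_energyDensity_sub_eq_integral_stressPower_sub
    (hsol : ClassicalSolution L T μ γ ρ₀ J v π Jt vy vt w πy πt)
    (hL : 0 ≤ L) (hγ : γ ≠ 1) (hρ₀ : IntervalIntegrable ρ₀ volume 0 L)
    {s t : ℝ} (hs : s ∈ Icc 0 T) (ht : t ∈ Icc 0 T) :
    (∫ y in 0..L, energyDensity γ ρ₀ J v π y t) - ∫ y in 0..L, energyDensity γ ρ₀ J v π y s =
      ∫ τ in s..t, (stressPower μ J v π vy L τ - stressPower μ J v π vy 0 τ) := by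
  have hst : uIcc s t ⊆ Icc 0 T := uIcc_subset_Icc hs ht
  refine integral_sub_integral_eq_integral_flux_sub (g := stressPowerDeriv μ J v π vy w πy)
    ?_ ?_ ?_ (hsol.intervalIntegrable_energyDensity hL hρ₀ hs)
    (hsol.intervalIntegrable_energyDensity hL hρ₀ ht) <;> rw [uIcc_of_le hL]
  · exact hsol.continuousOn_stressPowerDeriv.mono (prod_mono_right hst)
  · exact fun y hy τ hτ => (hsol.hasDerivWithinAt_energyDensity hγ hy (hst hτ)).mono hst
  · exact fun y hy τ hτ => hsol.hasDerivWithinAt_stressPower hy (hst hτ)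

end ClassicalSolution

theorem energy_identity_general {L T μ γ : ℝ} (hL : 0 ≤ L) (hγ : γ ≠ 1)
    {ρ₀ : ℝ → ℝ} (hρ₀ : IntervalIntegrable ρ₀ volume 0 L)
    {J v π Jt vy vt w πy πt : ℝ → ℝ → ℝ}
    (hsol : ClassicalSolution L T μ γ ρ₀ J v π Jt vy vt w πy πt)
    (hpower : ∀ t ∈ Icc 0 T, stressPower μ J v π vy 0 t = stressPower μ J v π vy L t)
    {s t : ℝ} (hs : s ∈ Icc 0 T) (ht : t ∈ Icc 0 T) :
    ∫ y in 0..L, energyDensity γ ρ₀ J v π y t = ∫ y in 0..L, energyDensity γ ρ₀ J v π y s := by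
  have hbalance := hsol.integral_energyDensity_sub_eq_integral_stressPower_sub hL hγ hρ₀ hs ht
  refine sub_eq_zero.mp (hbalance.trans (intervalIntegral.integral_zero_ae ?_))
  exact .of_forall fun τ hτ =>
    sub_eq_zero.mpr (hpower τ (uIcc_subset_Icc hs ht (uIoc_subset_uIcc hτ))).symm

/-- (Basic energy identity, second part of Proposition 2.2.)
For a classical solution of (E1)–(E3) with `v(0,t) = v(L,t) = 0`, the energy
`∫₀ᴸ (ρ₀ v²/2 + Jπ/(γ-1)) dy` is constant in time, equal to its initial value. -/
theorem energy_identity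
    (L T μ γ : ℝ) (hL : 0 < L) (hT : 0 < T) (hμ : 0 < μ) (hγ : 1 < γ)
    (ρ₀ : ℝ → ℝ) (hρ₀ : ContinuousOn ρ₀ (Icc 0 L))
    (J v π Jt vy vt w πy πt : ℝ → ℝ → ℝ)
    (hsol : ClassicalSolution L T μ γ ρ₀ J v π Jt vy vt w πy πt)
    (hbc : ∀ t ∈ Icc (0:ℝ) T, v 0 t = 0 ∧ v L t = 0) :
    ∀ t ∈ Icc (0:ℝ) T,
      (∫ y in (0:ℝ)..L, (ρ₀ y * (v y t) ^ 2 / 2 + J y t * π y t / (γ - 1)))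
        = ∫ y in (0:ℝ)..L, (ρ₀ y * (v y 0) ^ 2 / 2 + J y 0 * π y 0 / (γ - 1)) := by
  exact fun t ht => energy_identity_general hL.le hγ.ne' (hρ₀.intervalIntegrable_of_Icc hL.le) hsol
    (fun τ hτ => by simp [stressPower, hbc τ hτ]) (left_mem_Icc.mpr hT.le) ht
end

section
/- Let (J, v, π) be a classical solution of (E1)–(E3) on [0,L]×[0,T] with boundary condition v(0,t) = v(L,t) = 0, and assume additionally that ∂_y J exists with the mixed derivative ∂_t ∂_y J continuous on [0,L]×[0,T]. Define F(y,t) := ∫₀^y ρ₀(ξ)( v(ξ,t) − v₀(ξ) ) dξ − μ log( J(y,t)/J₀(y) ) + ∫₀ᵗ π(y,τ) dτ. Then F(y,t) = F(z,t) for all y, z ∈ [0,L] and all t ∈ [0,T]; that is, F is independent of the spatial variable. -/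
open Set MeasureTheory

/-!
The momentum equation is the balance law `∂ₜ(ρ₀ v) = ∂_y σ` for the effective stress
`σ = μ (∂ₜJ)/J - π`, since `∂_y v = ∂ₜJ`. Integrating it over `[0,y] × [0,t]`, in the two possible
orders, gives `∫₀ʸ ρ₀ (v - v₀) dξ = ∫₀ᵗ (σ(y,τ) - σ(0,τ)) dτ`. As `(∂ₜJ)/J = ∂ₜ log J`, the
quantity `F(y,t)` is `∫₀ʸ ρ₀ (v - v₀) dξ - ∫₀ᵗ σ(y,τ) dτ`, that is, `-∫₀ᵗ σ(0,τ) dτ`.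
-/

section Calculus

variable {E : Type*} [NormedAddCommGroup E] {S I : Set ℝ} {a b s t : ℝ}

theorem intervalIntegrable_of_continuousOn_ordConnected {f : ℝ → E} (hS : S.OrdConnected)
    (ha : a ∈ S) (hb : b ∈ S) (hf : ContinuousOn f S) : IntervalIntegrable f volume a b :=
  (hf.mono (hS.uIcc_subset ha hb)).intervalIntegrable

variable [NormedSpace ℝ E]

theorem intervalIntegral_swap_of_continuousOn {q : ℝ → ℝ → E}
    (hS : S.OrdConnected) (hI : I.OrdConnected) (ha : a ∈ S) (hb : b ∈ S) (hs : s ∈ I) (ht : t ∈ I)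
    (hq : ContinuousOn q.uncurry (S ×ˢ I)) :
    ∫ y in a..b, ∫ τ in s..t, q y τ = ∫ τ in s..t, ∫ y in a..b, q y τ := by
  have integrableOn_rectangle : IntegrableOn q.uncurry (uIcc a b ×ˢ uIcc s t) :=
    (hq.mono (prod_mono (hS.uIcc_subset ha hb) (hI.uIcc_subset hs ht))).integrableOn_compact
      (isCompact_uIcc.prod isCompact_uIcc)
  exact intervalIntegral_intervalIntegral_swap
    (integrableOn_rectangle.mono_set (prod_mono uIoc_subset_uIcc uIoc_subset_uIcc))

theorem integral_eq_sub_of_hasDerivWithinAt [CompleteSpace E] {f f' : ℝ → E}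
    (hS : S.OrdConnected) (ha : a ∈ S) (hb : b ∈ S)
    (hf : ∀ x ∈ S, HasDerivWithinAt f (f' x) S x) (hf' : ContinuousOn f' S) :
    ∫ x in a..b, f' x = f b - f a := by
  have hab : uIcc a b ⊆ S := hS.uIcc_subset ha hb
  refine intervalIntegral.integral_eq_sub_of_hasDeriv_right
    (fun x hx => (hf x (hab hx)).continuousWithinAt.mono hab) (fun x hx => ?_)
    (intervalIntegrable_of_continuousOn_ordConnected hS ha hb hf')
  have hSx : S ∈ nhds x := Filter.mem_of_superset (Icc_mem_nhds hx.1 hx.2) hab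
  exact ((hf x (mem_of_mem_nhds hSx)).hasDerivAt hSx).hasDerivWithinAt

theorem integral_sub_eq_integral_sub_of_balance_law [CompleteSpace E] {m σ q : ℝ → ℝ → E}
    (hS : S.OrdConnected) (hI : I.OrdConnected) (ha : a ∈ S) (hb : b ∈ S) (hs : s ∈ I) (ht : t ∈ I)
    (hm : ∀ y ∈ S, ∀ τ ∈ I, HasDerivWithinAt (m y) (q y τ) I τ)
    (hσ : ∀ y ∈ S, ∀ τ ∈ I, HasDerivWithinAt (fun x => σ x τ) (q y τ) S y)
    (hq : ContinuousOn q.uncurry (S ×ˢ I)) :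
    ∫ y in a..b, (m y t - m y s) = ∫ τ in s..t, (σ b τ - σ a τ) := by
  have time_integral : ∀ y ∈ S, ∫ τ in s..t, q y τ = m y t - m y s := fun y hy =>
    integral_eq_sub_of_hasDerivWithinAt hI hs ht (hm y hy) (hq.uncurry_left y hy)
  have space_integral : ∀ τ ∈ I, ∫ y in a..b, q y τ = σ b τ - σ a τ := fun τ hτ =>
    integral_eq_sub_of_hasDerivWithinAt hS ha hb (fun y hy => hσ y hy τ hτ)
      (hq.uncurry_right τ hτ)
  calc ∫ y in a..b, (m y t - m y s)
      = ∫ y in a..b, ∫ τ in s..t, q y τ := intervalIntegral.integral_congr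
        fun y hy => (time_integral y (hS.uIcc_subset ha hb hy)).symm
    _ = ∫ τ in s..t, ∫ y in a..b, q y τ :=
        intervalIntegral_swap_of_continuousOn hS hI ha hb hs ht hq
    _ = ∫ τ in s..t, (σ b τ - σ a τ) := intervalIntegral.integral_congr
        fun τ hτ => space_integral τ (hI.uIcc_subset hs ht hτ)

theorem integral_div_eq_log_div {f f' : ℝ → ℝ}
    (hS : S.OrdConnected) (ha : a ∈ S) (hb : b ∈ S) (hf₀ : ∀ x ∈ S, f x ≠ 0)
    (hf : ∀ x ∈ S, HasDerivWithinAt f (f' x) S x) (hf' : ContinuousOn f' S) :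
    ∫ x in a..b, f' x / f x = Real.log (f b / f a) := by
  rw [Real.log_div (hf₀ b hb) (hf₀ a ha)]
  exact integral_eq_sub_of_hasDerivWithinAt hS ha hb (fun x hx => (hf x hx).log (hf₀ x hx))
    (hf'.div (HasDerivWithinAt.continuousOn hf) hf₀)

end Calculus

/-- The effective stress `σ = μ (∂ₜJ)/J - π`, the flux of the momentum `ρ₀ v`. The argument `Jt`
stands for `∂ₜJ`, which (E1) identifies with `∂_y v`. -/
noncomputable def effectiveStress (μ : ℝ) (J Jt π : ℝ → ℝ → ℝ) (y t : ℝ) : ℝ :=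
  μ * (Jt y t / J y t) - π y t

/-- The quantity `F(y,t) = ∫₀ʸ ρ₀ (v - v₀) dξ - μ log (J/J₀) + ∫₀ᵗ π dτ`, in which the initial
data are the values at time `0`. -/
noncomputable def momentumPotential (μ : ℝ) (ρ₀ : ℝ → ℝ) (J v π : ℝ → ℝ → ℝ) (y t : ℝ) : ℝ :=
  (∫ ξ in (0 : ℝ)..y, ρ₀ ξ * (v ξ t - v ξ 0)) - μ * Real.log (J y t / J y 0)
    + ∫ τ in (0 : ℝ)..t, π y τ

/-- The momentum equation `ρ₀ ∂ₜv = ∂_y σ` with effective stress `σ = μ (∂ₜJ)/J - π`, on a set `S`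
of positions and a set `I` of times, with `Jt = ∂ₜJ` and `vt = ∂ₜv`. The derivatives are
taken within `I` and `S`, hence one-sided at endpoints. -/
structure MomentumBalance (S I : Set ℝ) (μ : ℝ) (ρ₀ : ℝ → ℝ) (J Jt v vt π : ℝ → ℝ → ℝ) :
    Prop where
  pos : ∀ y ∈ S, ∀ t ∈ I, 0 < J y t
  hasDerivWithinAt_J : ∀ y ∈ S, ∀ t ∈ I, HasDerivWithinAt (J y) (Jt y t) I t
  hasDerivWithinAt_v : ∀ y ∈ S, ∀ t ∈ I, HasDerivWithinAt (v y) (vt y t) I t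
  hasDerivWithinAt_effectiveStress : ∀ y ∈ S, ∀ t ∈ I,
    HasDerivWithinAt (fun x => effectiveStress μ J Jt π x t) (ρ₀ y * vt y t) S y
  continuousOn_Jt : ∀ y ∈ S, ContinuousOn (Jt y) I
  continuousOn_π : ∀ y ∈ S, ContinuousOn (π y) I
  continuousOn_mul_vt : ContinuousOn (fun p : ℝ × ℝ => ρ₀ p.1 * vt p.1 p.2) (S ×ˢ I)

namespace MomentumBalance

variable {S I : Set ℝ} {μ : ℝ} {ρ₀ : ℝ → ℝ} {J Jt v vt π : ℝ → ℝ → ℝ} {y z s t : ℝ}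

theorem continuousOn_div (h : MomentumBalance S I μ ρ₀ J Jt v vt π) (hy : y ∈ S) :
    ContinuousOn (fun τ => Jt y τ / J y τ) I :=
  (h.continuousOn_Jt y hy).div (HasDerivWithinAt.continuousOn (h.hasDerivWithinAt_J y hy))
    fun τ hτ => (h.pos y hy τ hτ).ne'

theorem continuousOn_effectiveStress (h : MomentumBalance S I μ ρ₀ J Jt v vt π) (hy : y ∈ S) :
    ContinuousOn (effectiveStress μ J Jt π y) I :=
  (continuousOn_const.mul (h.continuousOn_div hy)).sub (h.continuousOn_π y hy)

theorem integral_effectiveStress (h : MomentumBalance S I μ ρ₀ J Jt v vt π)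
    (hI : I.OrdConnected) (hy : y ∈ S) (hs : s ∈ I) (ht : t ∈ I) :
    ∫ τ in s..t, effectiveStress μ J Jt π y τ
      = μ * Real.log (J y t / J y s) - ∫ τ in s..t, π y τ := by
  have hdiv := intervalIntegrable_of_continuousOn_ordConnected hI hs ht (h.continuousOn_div hy)
  have hπ := intervalIntegrable_of_continuousOn_ordConnected hI hs ht (h.continuousOn_π y hy)
  have hlog : ∫ τ in s..t, Jt y τ / J y τ = Real.log (J y t / J y s) :=
    integral_div_eq_log_div hI hs ht (fun τ hτ => (h.pos y hy τ hτ).ne')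
      (h.hasDerivWithinAt_J y hy) (h.continuousOn_Jt y hy)
  simp only [effectiveStress]
  rw [intervalIntegral.integral_sub (hdiv.const_mul μ) hπ, intervalIntegral.integral_const_mul,
    hlog]

theorem integral_momentum_sub (h : MomentumBalance S I μ ρ₀ J Jt v vt π)
    (hS : S.OrdConnected) (hI : I.OrdConnected) (hy : y ∈ S) (hz : z ∈ S) (hs : s ∈ I)
    (ht : t ∈ I) :
    ∫ ξ in y..z, ρ₀ ξ * (v ξ t - v ξ s)
      = (∫ τ in s..t, effectiveStress μ J Jt π z τ)
        - ∫ τ in s..t, effectiveStress μ J Jt π y τ := by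
  have hint : ∀ x ∈ S, IntervalIntegrable (effectiveStress μ J Jt π x) volume s t := fun x hx =>
    intervalIntegrable_of_continuousOn_ordConnected hI hs ht (h.continuousOn_effectiveStress hx)
  rw [← intervalIntegral.integral_sub (hint z hz) (hint y hy)]
  simp only [mul_sub]
  exact integral_sub_eq_integral_sub_of_balance_law hS hI hy hz hs ht
    (fun x hx τ hτ => (h.hasDerivWithinAt_v x hx τ hτ).const_mul (ρ₀ x))
    h.hasDerivWithinAt_effectiveStress h.continuousOn_mul_vt

theorem momentumPotential_eq_neg_integral (h : MomentumBalance S I μ ρ₀ J Jt v vt π)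
    (hS : S.OrdConnected) (hI : I.OrdConnected) (h0S : (0 : ℝ) ∈ S) (h0I : (0 : ℝ) ∈ I)
    (hy : y ∈ S) (ht : t ∈ I) :
    momentumPotential μ ρ₀ J v π y t = -∫ τ in (0 : ℝ)..t, effectiveStress μ J Jt π 0 τ := by
  have hmomentum := h.integral_momentum_sub hS hI h0S hy h0I ht
  have hstress := h.integral_effectiveStress hI hy h0I ht
  unfold momentumPotential
  linarith

end MomentumBalance

theorem F_independent_of_space_general {S I : Set ℝ} {μ : ℝ} {ρ₀ : ℝ → ℝ}
    {J Jt v vt π : ℝ → ℝ → ℝ} (h : MomentumBalance S I μ ρ₀ J Jt v vt π)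
    (hS : S.OrdConnected) (hI : I.OrdConnected) (h0S : (0 : ℝ) ∈ S) (h0I : (0 : ℝ) ∈ I)
    {y z t : ℝ} (hy : y ∈ S) (hz : z ∈ S) (ht : t ∈ I) :
    momentumPotential μ ρ₀ J v π y t = momentumPotential μ ρ₀ J v π z t :=
  (h.momentumPotential_eq_neg_integral hS hI h0S h0I hy ht).trans
    (h.momentumPotential_eq_neg_integral hS hI h0S h0I hz ht).symm

namespace ClassicalSolution

variable {L T μ γ : ℝ} {ρ₀ : ℝ → ℝ} {J v π Jt vy vt w πy πt : ℝ → ℝ → ℝ} {y t : ℝ}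

theorem hasDerivWithinAt_effectiveStress
    (hsol : ClassicalSolution L T μ γ ρ₀ J v π Jt vy vt w πy πt)
    (hy : y ∈ Icc 0 L) (ht : t ∈ Icc 0 T) :
    HasDerivWithinAt (fun x => effectiveStress μ J Jt π x t) (ρ₀ y * vt y t) (Icc 0 L) y := by
  have momentum : ρ₀ y * vt y t = μ * w y t - πy y t := by linarith [hsol.eq2 y hy t ht]
  have stress_eq : ∀ x ∈ Icc 0 L, effectiveStress μ J Jt π x t = μ * (vy x t / J x t) - π x t :=
    fun x hx => by rw [effectiveStress, hsol.eq1 x hx t ht]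
  rw [momentum]
  exact (((hsol.hw y hy t ht).const_mul μ).sub (hsol.hPiy y hy t ht)).congr stress_eq
    (stress_eq y hy)

theorem momentumBalance (hsol : ClassicalSolution L T μ γ ρ₀ J v π Jt vy vt w πy πt)
    (hρ₀ : ContinuousOn ρ₀ (Icc 0 L)) :
    MomentumBalance (Icc 0 L) (Icc 0 T) μ ρ₀ J Jt v vt π where
  pos := hsol.Jpos
  hasDerivWithinAt_J := hsol.hJt
  hasDerivWithinAt_v := hsol.hvt
  hasDerivWithinAt_effectiveStress _ hy _ ht := hsol.hasDerivWithinAt_effectiveStress hy ht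
  continuousOn_Jt y hy := hsol.contJt.uncurry_left y hy
  continuousOn_π y hy := hsol.contPi.uncurry_left y hy
  continuousOn_mul_vt := (hρ₀.comp continuousOn_fst fun _ hp => hp.1).mul hsol.contvt

end ClassicalSolution

/-- The quantity
`F(y,t) = ∫₀ʸ ρ₀(v - v₀) dξ - μ log(J/J₀) + ∫₀ᵗ π dτ` is independent of the spatial
variable (key step toward the lower bound of `J`, Proposition 2.3). -/
theorem F_independent_of_space
    (L T μ γ : ℝ) (hL : 0 < L) (hT : 0 < T) (hμ : 0 < μ) (hγ : 1 < γ)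
    (ρ₀ : ℝ → ℝ) (hρ₀ : ContinuousOn ρ₀ (Icc 0 L))
    (J v π Jt vy vt w πy πt Jy Jyt : ℝ → ℝ → ℝ)
    (hsol : ClassicalSolution L T μ γ ρ₀ J v π Jt vy vt w πy πt)
    (hbc : ∀ t ∈ Icc (0:ℝ) T, v 0 t = 0 ∧ v L t = 0)
    (hJy : ∀ y ∈ Icc (0:ℝ) L, ∀ t ∈ Icc (0:ℝ) T,
      HasDerivWithinAt (fun x => J x t) (Jy y t) (Icc 0 L) y)
    (hJyt : ∀ y ∈ Icc (0:ℝ) L, ∀ t ∈ Icc (0:ℝ) T,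
      HasDerivWithinAt (fun s => Jy y s) (Jyt y t) (Icc 0 T) t)
    (hJytcont : ContinuousOn (fun p : ℝ × ℝ => Jyt p.1 p.2) (Icc 0 L ×ˢ Icc 0 T)) :
    ∀ y ∈ Icc (0:ℝ) L, ∀ z ∈ Icc (0:ℝ) L, ∀ t ∈ Icc (0:ℝ) T,
      ((∫ ξ in (0:ℝ)..y, ρ₀ ξ * (v ξ t - v ξ 0)) - μ * Real.log (J y t / J y 0)
          + ∫ τ in (0:ℝ)..t, π y τ)
        = ((∫ ξ in (0:ℝ)..z, ρ₀ ξ * (v ξ t - v ξ 0)) - μ * Real.log (J z t / J z 0)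
          + ∫ τ in (0:ℝ)..t, π z τ) := by
  intro y hy z hz t ht
  exact F_independent_of_space_general (hsol.momentumBalance hρ₀) ordConnected_Icc ordConnected_Icc
    (left_mem_Icc.2 hL.le) (left_mem_Icc.2 hT.le) hy hz ht
end

section
/- Let (J, v, π) be a classical solution of (E1)–(E3) on [0,L]×[0,T] with boundary condition v(0,t) = v(L,t) = 0, and assume additionally that ∂_y J exists with ∂_t ∂_y J continuous on [0,L]×[0,T]. Define B(y,t) := exp( (1/μ) ∫₀^y ρ₀(ξ)( v₀(ξ) − v(ξ,t) ) dξ ), and let H : [0,T] → (0,∞) with H(0) = 1 be such that ( J/J₀ ) H B = exp( (1/μ) ∫₀ᵗ π dτ ) on [0,L]×[0,T]. Then for all (y,t) ∈ [0,L]×[0,T]: J(y,t) H(t) B(y,t) = J₀(y) + (1/μ) ∫₀ᵗ H(τ) B(y,τ) J(y,τ) π(y,τ) dτ. -/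
open Set MeasureTheory

/-!
Fix `y`. The relation defining `H` says that `Φ = J H B` equals `J₀ exp ((1/μ) ∫₀ᵗ π)`, so `Φ` is
the solution of the linear equation `Φ' = (1/μ) π Φ` with `Φ(0) = J₀`, and the identity is this
equation integrated in time. For merely integrable `π` the equation holds almost everywhere, and it
can still be integrated because `exp ((1/μ) ∫₀ᵗ π)` is absolutely continuous in `t`.
-/

theorem absolutelyContinuousOnInterval_comp_of_locallyLipschitzOn {E Y : Type*}
    [SeminormedAddCommGroup E] [PseudoMetricSpace Y] {g : E → Y} {f : ℝ → E} {a b : ℝ}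
    (hg : LocallyLipschitzOn (f '' uIcc a b) g) (hf : AbsolutelyContinuousOnInterval f a b) :
    AbsolutelyContinuousOnInterval (g ∘ f) a b := by
  obtain ⟨K, hK⟩ :=
    hg.exists_lipschitzOnWith_of_compact (isCompact_uIcc.image_of_continuousOn hf.continuousOn)
  unfold AbsolutelyContinuousOnInterval at hf ⊢
  have tendsto_bound := hf.const_mul (K : ℝ)
  rw [mul_zero] at tendsto_bound
  refine squeeze_zero' (.of_forall fun _ => Finset.sum_nonneg fun _ _ => dist_nonneg) ?_
    tendsto_bound
  filter_upwards [Filter.mem_inf_of_right (Filter.mem_principal_self _)] with I hI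
  rw [Finset.mul_sum]
  gcongr with i hi
  exact hK.dist_le_mul _ (mem_image_of_mem f (hI.1 i hi).1) _ (mem_image_of_mem f (hI.1 i hi).2)

section ExpIntegral

variable {f : ℝ → ℝ} {a b : ℝ}

theorem absolutelyContinuousOnInterval_exp_integral (hf : IntervalIntegrable f volume a b) :
    AbsolutelyContinuousOnInterval (fun t => Real.exp (∫ s in a..t, f s)) a b :=
  absolutelyContinuousOnInterval_comp_of_locallyLipschitzOn (g := Real.exp)
    (Real.contDiff_exp (n := 1)).locallyLipschitz.locallyLipschitzOn
    (hf.absolutelyContinuousOnInterval_intervalIntegral left_mem_uIcc)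

theorem integral_mul_exp_integral (hf : IntervalIntegrable f volume a b) :
    ∫ t in a..b, f t * Real.exp (∫ s in a..t, f s) = Real.exp (∫ s in a..b, f s) - 1 := by
  have deriv_exp_integral : ∀ᵐ t, t ∈ uIoc a b →
      f t * Real.exp (∫ s in a..t, f s) = deriv (fun t => Real.exp (∫ s in a..t, f s)) t := by
    filter_upwards [hf.ae_hasDerivAt_integral] with t hasDerivAt_integral ht
    rw [(hasDerivAt_integral (uIoc_subset_uIcc ht) a left_mem_uIcc).exp.deriv, mul_comm]
  rw [intervalIntegral.integral_congr_ae deriv_exp_integral,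
    (absolutelyContinuousOnInterval_exp_integral hf).integral_deriv_eq_sub,
    intervalIntegral.integral_same, Real.exp_zero]

theorem eq_add_integral_mul_of_eq_mul_exp_integral {Φ : ℝ → ℝ} {C : ℝ}
    (hf : IntervalIntegrable f volume a b)
    (hΦ : ∀ t ∈ uIcc a b, Φ t = C * Real.exp (∫ s in a..t, f s)) :
    Φ b = C + ∫ t in a..b, f t * Φ t := by
  have integral_eq : ∫ t in a..b, f t * Φ t = C * (Real.exp (∫ s in a..b, f s) - 1) := by
    rw [← integral_mul_exp_integral hf, ← intervalIntegral.integral_const_mul]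
    refine intervalIntegral.integral_congr fun t ht => ?_
    simp only [hΦ t ht, mul_left_comm]
  rw [integral_eq, hΦ b right_mem_uIcc]
  ring

end ExpIntegral

theorem ClassicalSolution.intervalIntegrable_pi {L T μ γ : ℝ} {ρ₀ : ℝ → ℝ}
    {J v π Jt vy vt w πy πt : ℝ → ℝ → ℝ}
    (hsol : ClassicalSolution L T μ γ ρ₀ J v π Jt vy vt w πy πt)
    {y a b : ℝ} (hy : y ∈ Icc 0 L) (hab : uIcc a b ⊆ Icc 0 T) :
    IntervalIntegrable (π y) volume a b :=
  ((hsol.contPi.uncurry_left y hy).mono hab).intervalIntegrable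

theorem integral_identity_N3_general {J H B π : ℝ → ℝ} {a b : ℝ} (c : ℝ)
    (hπ : IntervalIntegrable π volume a b) (hJ : J a ≠ 0)
    (hN1 : ∀ t ∈ uIcc a b, J t / J a * H t * B t = Real.exp (c * ∫ τ in a..t, π τ)) :
    J b * H b * B b = J a + c * ∫ τ in a..b, H τ * B τ * J τ * π τ := by
  have product_eq (t : ℝ) (ht : t ∈ uIcc a b) :
      J t * H t * B t = J a * Real.exp (∫ τ in a..t, c * π τ) := by
    rw [intervalIntegral.integral_const_mul, ← hN1 t ht]
    field_simp
  rw [eq_add_integral_mul_of_eq_mul_exp_integral (Φ := fun t => J t * H t * B t)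
    (hπ.const_mul c) product_eq, ← intervalIntegral.integral_const_mul]
  congr! 3
  ring

/-- (Integral identity (N3), Section 2.) If `H > 0` with `H(0) = 1`
satisfies `(J/J₀) H B = exp((1/μ)∫₀ᵗ π dτ)`, then
`J H B = J₀ + (1/μ) ∫₀ᵗ H B J π dτ`, where
`B(y,t) = exp((1/μ) ∫₀ʸ ρ₀ (v₀ - v(·,t)) dξ)`. -/
theorem integral_identity_N3
    (L T μ γ : ℝ) (hL : 0 < L) (hT : 0 < T) (hμ : 0 < μ) (hγ : 1 < γ)
    (ρ₀ : ℝ → ℝ) (hρ₀ : ContinuousOn ρ₀ (Icc 0 L))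
    (J v π Jt vy vt w πy πt Jy Jyt : ℝ → ℝ → ℝ)
    (hsol : ClassicalSolution L T μ γ ρ₀ J v π Jt vy vt w πy πt)
    (hbc : ∀ t ∈ Icc (0:ℝ) T, v 0 t = 0 ∧ v L t = 0)
    (hJy : ∀ y ∈ Icc (0:ℝ) L, ∀ t ∈ Icc (0:ℝ) T,
      HasDerivWithinAt (fun x => J x t) (Jy y t) (Icc 0 L) y)
    (hJyt : ∀ y ∈ Icc (0:ℝ) L, ∀ t ∈ Icc (0:ℝ) T,
      HasDerivWithinAt (fun s => Jy y s) (Jyt y t) (Icc 0 T) t)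
    (hJytcont : ContinuousOn (fun p : ℝ × ℝ => Jyt p.1 p.2) (Icc 0 L ×ˢ Icc 0 T))
    (H : ℝ → ℝ) (hHpos : ∀ t ∈ Icc (0:ℝ) T, 0 < H t) (hH0 : H 0 = 1)
    (hN1 : ∀ y ∈ Icc (0:ℝ) L, ∀ t ∈ Icc (0:ℝ) T,
      (J y t / J y 0) * H t
          * Real.exp ((1 / μ) * ∫ ξ in (0:ℝ)..y, ρ₀ ξ * (v ξ 0 - v ξ t))
        = Real.exp ((1 / μ) * ∫ τ in (0:ℝ)..t, π y τ)) :
    ∀ y ∈ Icc (0:ℝ) L, ∀ t ∈ Icc (0:ℝ) T,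
      J y t * H t * Real.exp ((1 / μ) * ∫ ξ in (0:ℝ)..y, ρ₀ ξ * (v ξ 0 - v ξ t))
        = J y 0 + (1 / μ) * ∫ τ in (0:ℝ)..t,
            H τ * Real.exp ((1 / μ) * ∫ ξ in (0:ℝ)..y, ρ₀ ξ * (v ξ 0 - v ξ τ))
              * J y τ * π y τ := by
  intro y hy t ht
  have time_subset : uIcc 0 t ⊆ Icc 0 T := uIcc_subset_Icc (left_mem_Icc.mpr hT.le) ht
  exact integral_identity_N3_general (1 / μ) (hsol.intervalIntegrable_pi hy time_subset)
    (hsol.Jpos y hy 0 (time_subset left_mem_uIcc)).ne' fun s hs => hN1 y hy s (time_subset hs)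
end

section
/- Let ρ₀ ∈ C¹([0,L]) with ρ₀ > 0, and let (J, v, π) be a classical solution of (E1)–(E3) on [0,L]×[0,T] with boundary condition v(0,t) = v(L,t) = 0, such that J, v are twice continuously differentiable and π is continuously differentiable on [0,L]×[0,T]. Define G := μ (∂_y v)/J − π. Then G satisfies pointwise on (0,L)×(0,T) the equation ∂_t G − (μ/J) ∂_y( (∂_y G)/ρ₀ ) = −γ ((∂_y v)/J) G, and moreover ∂_y G(0,t) = ∂_y G(L,t) = 0 for all t ∈ (0,T). -/
open Set MeasureTheory

/-!
For `G = μ (∂_y v) / J - π`, the momentum equation says exactly `∂_y G = ρ₀ ∂ₜv`. So `∂_y G`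
vanishes wherever `v` is pinned, and `∂_y((∂_y G) / ρ₀) = ∂_y ∂ₜv`, which Schwarz's theorem turns
into `∂ₜ ∂_y v`. Differentiating the formula for `G` in time, with `∂ₜJ = ∂_y v` and with `∂ₜπ`
taken from the pressure equation, then gives the equation for `G`.
-/

open Filter Topology

section MixedDerivatives

variable {𝕜 E X : Type*} [RCLike 𝕜] [NormedAddCommGroup E] [NormedSpace 𝕜 E] [TopologicalSpace X]

theorem norm_slope_sub_le_of_norm_hasDerivWithinAt_sub_le {f f' : 𝕜 → E} {s : Set 𝕜} {c : E} {C : ℝ}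
    {x y : 𝕜} (hf : ∀ z ∈ s, HasDerivWithinAt f (f' z) s z) (bound : ∀ z ∈ s, ‖f' z - c‖ ≤ C)
    (hs : Convex ℝ s) (hx : x ∈ s) (hy : y ∈ s) (hne : y ≠ x) : ‖slope f x y - c‖ ≤ C := by
  have hderiv : ∀ z ∈ s, HasDerivWithinAt (fun z => f z - z • c) (f' z - c) s z := fun z hz => by
    simpa using (hf z hz).fun_sub ((hasDerivWithinAt_id z s).smul_const c)
  have hmvt := hs.norm_image_sub_le_of_norm_hasDerivWithin_le hderiv bound hx hy
  have hslope : slope f x y - c = (y - x)⁻¹ • (f y - y • c - (f x - x • c)) := by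
    rw [sub_sub_sub_comm, ← sub_smul, smul_sub, inv_smul_smul₀ (sub_ne_zero.2 hne),
      slope_def_module]
  rw [hslope, norm_smul, norm_inv]
  exact inv_mul_le_of_le_mul₀ (norm_nonneg _) ((norm_nonneg _).trans (bound x hx))
    (by rwa [mul_comm])

theorem tendsto_slope_nhdsNE_prod_nhds_of_continuousAt {f f' : 𝕜 → X → E} {x : 𝕜} {a : X}
    (hf : ∀ᶠ p : 𝕜 × X in 𝓝 (x, a), HasDerivAt (f · p.2) (f' p.1 p.2) p.1)
    (hf' : ContinuousAt (fun p : 𝕜 × X => f' p.1 p.2) (x, a)) :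
    Tendsto (fun p : 𝕜 × X => slope (f · p.2) x p.1) (𝓝[≠] x ×ˢ 𝓝 a) (𝓝 (f' x a)) := by
  refine Metric.nhds_basis_closedBall.tendsto_right_iff.2 fun ε hε => ?_
  have hclose : ∀ᶠ p : 𝕜 × X in 𝓝 (x, a), ‖f' p.1 p.2 - f' x a‖ ≤ ε := by
    filter_upwards [hf'.eventually (Metric.closedBall_mem_nhds _ hε)] with p hp
    exact mem_closedBall_iff_norm.1 hp
  obtain ⟨U, hU, V, hV, hUV⟩ := mem_nhds_prod_iff.1 (hf.and hclose)
  obtain ⟨r, hr, hball⟩ := Metric.mem_nhds_iff.1 hU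
  filter_upwards [prod_mem_prod (inter_mem_nhdsWithin {x}ᶜ (Metric.ball_mem_nhds x hr)) hV]
    with ⟨z, b⟩ ⟨⟨hne, hz⟩, hb⟩
  have hball_b : ∀ u ∈ Metric.ball x r, HasDerivAt (f · b) (f' u b) u ∧ ‖f' u b - f' x a‖ ≤ ε :=
    fun u hu => @hUV (u, b) ⟨hball hu, hb⟩
  exact mem_closedBall_iff_norm.2 <| norm_slope_sub_le_of_norm_hasDerivWithinAt_sub_le
    (fun u hu => (hball_b u hu).1.hasDerivWithinAt) (fun u hu => (hball_b u hu).2)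
    (convex_ball x r) (Metric.mem_ball_self hr) hz hne

/-- Schwarz's theorem: the slopes of `f` in the first variable converge to `f₁`, and continuity of
`f₂₁` at the point makes their derivatives in the second variable converge uniformly. -/
theorem hasDerivAt_partialDeriv_of_continuousAt {f f₂ f₂₁ : 𝕜 → 𝕜 → E} {f₁ : 𝕜 → E} {x t : 𝕜}
    (hf₁ : ∀ᶠ s in 𝓝 t, HasDerivAt (f · s) (f₁ s) x)
    (hf₂ : ∀ᶠ p : 𝕜 × 𝕜 in 𝓝 (x, t), HasDerivAt (f p.1) (f₂ p.1 p.2) p.2)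
    (hf₂₁ : ∀ᶠ p : 𝕜 × 𝕜 in 𝓝 (x, t), HasDerivAt (f₂ · p.2) (f₂₁ p.1 p.2) p.1)
    (hcont : ContinuousAt (fun p : 𝕜 × 𝕜 => f₂₁ p.1 p.2) (x, t)) :
    HasDerivAt f₁ (f₂₁ x t) t := by
  have hslope₂ : TendstoUniformlyOnFilter (fun y s => slope (f₂ · s) x y) (fun _ => f₂₁ x t)
      (𝓝[≠] x) (𝓝 t) :=
    tendsto_prod_filter_iff.1 (tendsto_slope_nhdsNE_prod_nhds_of_continuousAt hf₂₁ hcont)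
  have hslope₁ : ∀ᶠ s in 𝓝 t, Tendsto (fun y => slope (f · s) x y) (𝓝[≠] x) (𝓝 (f₁ s)) :=
    hf₁.mono fun _ h => h.tendsto_slope
  refine hasDerivAt_of_tendstoUniformlyOnFilter (g' := fun _ => f₂₁ x t) hslope₂ ?_ hslope₁
  rw [nhds_prod_eq] at hf₂
  have hf₂x : ∀ᶠ s in 𝓝 t, HasDerivAt (f x) (f₂ x s) s := hf₂.curry.self_of_nhds
  filter_upwards [hf₂.filter_mono (prod_mono_left _ nhdsWithin_le_nhds), hf₂x.prod_inr (𝓝[≠] x)]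
    with p hp hpx
  exact (hp.sub hpx).const_smul (p.1 - x)⁻¹

end MixedDerivatives

/-- The effective viscous flux `G = μ (∂_y v) / J - π`, with the partial derivative `vy = ∂_y v`
passed as a separate argument. -/
noncomputable def effectiveViscousFlux (μ : ℝ) (J vy π : ℝ → ℝ → ℝ) (y t : ℝ) : ℝ :=
  μ * vy y t / J y t - π y t

namespace ClassicalSolution

variable {L T μ γ : ℝ} {ρ₀ : ℝ → ℝ} {J v π Jt vy vt w πy πt : ℝ → ℝ → ℝ} {y t : ℝ}

theorem hasDerivWithinAt_effectiveViscousFlux_space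
    (hsol : ClassicalSolution L T μ γ ρ₀ J v π Jt vy vt w πy πt)
    (hy : y ∈ Icc 0 L) (ht : t ∈ Icc 0 T) :
    HasDerivWithinAt (fun x => effectiveViscousFlux μ J vy π x t) (ρ₀ y * vt y t) (Icc 0 L) y := by
  have hmomentum : ρ₀ y * vt y t = μ * w y t - πy y t := by linarith [hsol.eq2 y hy t ht]
  simp only [hmomentum, effectiveViscousFlux, mul_div_assoc]
  exact ((hsol.hw y hy t ht).const_mul μ).sub (hsol.hPiy y hy t ht)

theorem vt_eq_zero_of_forall_v_eq_zero
    (hsol : ClassicalSolution L T μ γ ρ₀ J v π Jt vy vt w πy πt) (hT : 0 < T)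
    (hy : y ∈ Icc 0 L) (hv : ∀ s ∈ Icc 0 T, v y s = 0) (ht : t ∈ Icc 0 T) : vt y t = 0 :=
  (uniqueDiffOn_Icc hT t ht).eq_deriv _ (hsol.hvt y hy t ht)
    ((hasDerivWithinAt_const t (Icc 0 T) (0 : ℝ)).congr hv (hv t ht))

theorem hasDerivAt_vy_time (hsol : ClassicalSolution L T μ γ ρ₀ J v π Jt vy vt w πy πt)
    {vty : ℝ → ℝ → ℝ}
    (hvty : ∀ x ∈ Icc 0 L, ∀ s ∈ Icc 0 T, HasDerivWithinAt (vt · s) (vty x s) (Icc 0 L) x)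
    (hcont : ContinuousOn (fun p : ℝ × ℝ => vty p.1 p.2) (Icc 0 L ×ˢ Icc 0 T))
    (hy : y ∈ Ioo 0 L) (ht : t ∈ Ioo 0 T) : HasDerivAt (vy y) (vty y t) t := by
  have hrect : Icc 0 L ×ˢ Icc 0 T ∈ 𝓝 (y, t) :=
    prod_mem_nhds (Icc_mem_nhds hy.1 hy.2) (Icc_mem_nhds ht.1 ht.2)
  have hinterior : ∀ᶠ p : ℝ × ℝ in 𝓝 (y, t), p ∈ Ioo 0 L ×ˢ Ioo 0 T :=
    (isOpen_Ioo.prod isOpen_Ioo).mem_nhds ⟨hy, ht⟩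
  refine hasDerivAt_partialDeriv_of_continuousAt (f := v) (f₂ := vt) ?_ ?_ ?_
    (hcont.continuousAt hrect)
  · filter_upwards [Icc_mem_nhds ht.1 ht.2] with s hs
    exact (hsol.hvy y (Ioo_subset_Icc_self hy) s hs).hasDerivAt (Icc_mem_nhds hy.1 hy.2)
  · filter_upwards [hinterior] with p ⟨hx, hs⟩
    exact (hsol.hvt p.1 (Ioo_subset_Icc_self hx) p.2 (Ioo_subset_Icc_self hs)).hasDerivAt
      (Icc_mem_nhds hs.1 hs.2)
  · filter_upwards [hinterior] with p ⟨hx, hs⟩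
    exact (hvty p.1 (Ioo_subset_Icc_self hx) p.2 (Ioo_subset_Icc_self hs)).hasDerivAt
      (Icc_mem_nhds hx.1 hx.2)

theorem hasDerivAt_effectiveViscousFlux_time
    (hsol : ClassicalSolution L T μ γ ρ₀ J v π Jt vy vt w πy πt)
    {vyt : ℝ} (hvyt : HasDerivAt (vy y) vyt t) (hy : y ∈ Icc 0 L) (ht : t ∈ Ioo 0 T) :
    HasDerivAt (effectiveViscousFlux μ J vy π y)
      (μ / J y t * vyt - γ * (vy y t / J y t) * effectiveViscousFlux μ J vy π y t) t := by
  have ht' := Ioo_subset_Icc_self ht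
  have hT : Icc 0 T ∈ 𝓝 t := Icc_mem_nhds ht.1 ht.2
  have hJ : J y t ≠ 0 := (hsol.Jpos y hy t ht').ne'
  have hJt : HasDerivAt (J y) (vy y t) t :=
    hsol.eq1 y hy t ht' ▸ (hsol.hJt y hy t ht').hasDerivAt hT
  have hπt : HasDerivAt (π y) (πt y t) t := (hsol.hPit y hy t ht').hasDerivAt hT
  have hpressure : πt y t =
      μ * (γ - 1) * (vy y t / J y t) ^ 2 - γ * (vy y t / J y t) * π y t := by
    linarith [hsol.eq3 y hy t ht']
  refine (((hvyt.const_mul μ).div hJt hJ).sub hπt).congr_deriv ?_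
  rw [hpressure, effectiveViscousFlux]
  field_simp
  ring

end ClassicalSolution

theorem effective_viscous_flux_equation_general
    {L T μ γ : ℝ} (hL : 0 < L) (hT : 0 < T) {ρ₀ : ℝ → ℝ} (hρ₀ : ∀ y ∈ Icc 0 L, ρ₀ y ≠ 0)
    {J v π Jt vy vt w πy πt Gy Gt Q : ℝ → ℝ → ℝ}
    (hsol : ClassicalSolution L T μ γ ρ₀ J v π Jt vy vt w πy πt)
    (hbc : ∀ t ∈ Icc 0 T, v 0 t = 0 ∧ v L t = 0)
    (hGy : ∀ y ∈ Icc 0 L, ∀ t ∈ Icc 0 T,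
      HasDerivWithinAt (fun x => effectiveViscousFlux μ J vy π x t) (Gy y t) (Icc 0 L) y)
    (hGt : ∀ y ∈ Icc 0 L, ∀ t ∈ Icc 0 T,
      HasDerivWithinAt (fun s => effectiveViscousFlux μ J vy π y s) (Gt y t) (Icc 0 T) t)
    (hQ : ∀ y ∈ Icc 0 L, ∀ t ∈ Icc 0 T,
      HasDerivWithinAt (fun x => Gy x t / ρ₀ x) (Q y t) (Icc 0 L) y)
    (hQcont : ContinuousOn (fun p : ℝ × ℝ => Q p.1 p.2) (Icc 0 L ×ˢ Icc 0 T)) :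
    (∀ y ∈ Ioo 0 L, ∀ t ∈ Ioo 0 T,
      Gt y t - (μ / J y t) * Q y t
        = -γ * (vy y t / J y t) * effectiveViscousFlux μ J vy π y t) ∧
    (∀ t ∈ Icc 0 T, Gy 0 t = 0 ∧ Gy L t = 0) := by
  have hGy_eq : ∀ y ∈ Icc 0 L, ∀ t ∈ Icc 0 T, Gy y t = ρ₀ y * vt y t := fun y hy t ht =>
    (uniqueDiffOn_Icc hL y hy).eq_deriv _ (hGy y hy t ht)
      (hsol.hasDerivWithinAt_effectiveViscousFlux_space hy ht)
  constructor
  · intro y hy t ht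
    have hvt_eq : ∀ x ∈ Icc 0 L, ∀ s ∈ Icc 0 T, vt x s = Gy x s / ρ₀ x := fun x hx s hs => by
      rw [hGy_eq x hx s hs, mul_div_cancel_left₀ _ (hρ₀ x hx)]
    have hvyt : HasDerivAt (vy y) (Q y t) t := hsol.hasDerivAt_vy_time
      (fun x hx s hs => (hQ x hx s hs).congr (hvt_eq · · s hs) (hvt_eq x hx s hs)) hQcont hy ht
    have hy' := Ioo_subset_Icc_self hy
    have hGt_eq := ((hGt y hy' t (Ioo_subset_Icc_self ht)).hasDerivAt
      (Icc_mem_nhds ht.1 ht.2)).unique (hsol.hasDerivAt_effectiveViscousFlux_time hvyt hy' ht)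
    linear_combination hGt_eq
  · intro t ht
    have hGy_eq_zero : ∀ y ∈ Icc 0 L, (∀ s ∈ Icc 0 T, v y s = 0) → Gy y t = 0 :=
      fun y hy hv => by
        rw [hGy_eq y hy t ht, hsol.vt_eq_zero_of_forall_v_eq_zero hT hy hv ht, mul_zero]
    exact ⟨hGy_eq_zero 0 (left_mem_Icc.2 hL.le) fun s hs => (hbc s hs).1,
      hGy_eq_zero L (right_mem_Icc.2 hL.le) fun s hs => (hbc s hs).2⟩

/-- (Equation (EQG) and boundary condition (BCG) for the effective
viscous flux `G = μ(∂_y v)/J - π`.) For a smooth enough classical solution with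
`ρ₀ ∈ C¹`, `ρ₀ > 0`, and `v(0,t) = v(L,t) = 0`, `G` satisfies
`∂ₜG - (μ/J) ∂_y((∂_y G)/ρ₀) = -γ((∂_y v)/J) G` on `(0,L)×(0,T)` and
`∂_y G(0,t) = ∂_y G(L,t) = 0`. -/
theorem effective_viscous_flux_equation
    (L T μ γ : ℝ) (hL : 0 < L) (hT : 0 < T) (hμ : 0 < μ) (hγ : 1 < γ)
    (ρ₀ ρ₀d : ℝ → ℝ)
    (hρ₀d : ∀ y ∈ Icc (0:ℝ) L, HasDerivWithinAt ρ₀ (ρ₀d y) (Icc 0 L) y)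
    (hρ₀dcont : ContinuousOn ρ₀d (Icc 0 L))
    (hρ₀pos : ∀ y ∈ Icc (0:ℝ) L, 0 < ρ₀ y)
    (J v π Jt vy vt w πy πt Gy Gt Q vyt vty : ℝ → ℝ → ℝ)
    (hsol : ClassicalSolution L T μ γ ρ₀ J v π Jt vy vt w πy πt)
    (hbc : ∀ t ∈ Icc (0:ℝ) T, v 0 t = 0 ∧ v L t = 0)
    (hGy : ∀ y ∈ Icc (0:ℝ) L, ∀ t ∈ Icc (0:ℝ) T,
      HasDerivWithinAt (fun x => μ * vy x t / J x t - π x t) (Gy y t) (Icc 0 L) y)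
    (hGt : ∀ y ∈ Icc (0:ℝ) L, ∀ t ∈ Icc (0:ℝ) T,
      HasDerivWithinAt (fun s => μ * vy y s / J y s - π y s) (Gt y t) (Icc 0 T) t)
    (hQ : ∀ y ∈ Icc (0:ℝ) L, ∀ t ∈ Icc (0:ℝ) T,
      HasDerivWithinAt (fun x => Gy x t / ρ₀ x) (Q y t) (Icc 0 L) y)
    (hvyt : ∀ y ∈ Icc (0:ℝ) L, ∀ t ∈ Icc (0:ℝ) T,
      HasDerivWithinAt (fun s => vy y s) (vyt y t) (Icc 0 T) t)
    (hvty : ∀ y ∈ Icc (0:ℝ) L, ∀ t ∈ Icc (0:ℝ) T,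
      HasDerivWithinAt (fun x => vt x t) (vty y t) (Icc 0 L) y)
    (hGycont : ContinuousOn (fun p : ℝ × ℝ => Gy p.1 p.2) (Icc 0 L ×ˢ Icc 0 T))
    (hGtcont : ContinuousOn (fun p : ℝ × ℝ => Gt p.1 p.2) (Icc 0 L ×ˢ Icc 0 T))
    (hQcont : ContinuousOn (fun p : ℝ × ℝ => Q p.1 p.2) (Icc 0 L ×ˢ Icc 0 T))
    (hvytcont : ContinuousOn (fun p : ℝ × ℝ => vyt p.1 p.2) (Icc 0 L ×ˢ Icc 0 T))
    (hvtycont : ContinuousOn (fun p : ℝ × ℝ => vty p.1 p.2) (Icc 0 L ×ˢ Icc 0 T)) :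
    (∀ y ∈ Ioo (0:ℝ) L, ∀ t ∈ Ioo (0:ℝ) T,
      Gt y t - (μ / J y t) * Q y t
        = -γ * (vy y t / J y t) * (μ * vy y t / J y t - π y t)) ∧
    (∀ t ∈ Ioo (0:ℝ) T, Gy 0 t = 0 ∧ Gy L t = 0) := by
  obtain ⟨hequation, hboundary⟩ := effective_viscous_flux_equation_general hL hT
    (fun y hy => (hρ₀pos y hy).ne') hsol hbc hGy hGt hQ hQcont
  exact ⟨hequation, fun t ht => hboundary t (Ioo_subset_Icc_self ht)⟩
end

section
/- Let (J, v, π) be a classical solution of (E1)–(E3) on [0,L]×[0,T] with π(·,0) = π₀ ≥ 0 on [0,L], and set G := μ (∂_y v)/J − π. Then for all (y,t) ∈ [0,L]×[0,T]: 0 ≤ π(y,t) ≤ π₀(y) + (γ²/(4μ)) ∫₀ᵗ G(y,s)² ds. -/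
open Set MeasureTheory

/-!
Along a particle path, with strain rate `a = (∂_y v) / J`, the energy equation (E3) is an
ordinary differential equation for the pressure, `p' + γ a p = μ (γ - 1) a²`. Its right-hand side
is nonnegative, so the integrating factor `exp (∫ γ a)` propagates `0 ≤ p` from the initial time.
Completing the square in terms of the effective viscous flux `G = μ a - p` turns the same equation
into the Riccati identity `p' + (p - (γ - 2) / 2 * G)² / μ = γ² / (4 μ) * G²`; dropping the square
and integrating in time gives the upper bound.
-/

theorem hasDerivAt_integral_of_continuousOn_Icc {E : Type*} [NormedAddCommGroup E]
    [NormedSpace ℝ E] [CompleteSpace E] {t₀ t₁ t : ℝ} {k : ℝ → E}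
    (hk : ContinuousOn k (Icc t₀ t₁)) (ht : t ∈ Ioo t₀ t₁) :
    HasDerivAt (fun r ↦ ∫ s in t₀..r, k s) (k t) t := by
  have hint : IntervalIntegrable k volume t₀ t :=
    (hk.mono (Icc_subset_Icc_right ht.2.le)).intervalIntegrable_of_Icc ht.1.le
  exact intervalIntegral.integral_hasDerivAt_right hint
    ((hk.mono Ioo_subset_Icc_self).stronglyMeasurableAtFilter isOpen_Ioo t ht)
    (hk.continuousAt (Icc_mem_nhds ht.1 ht.2))

section LinearDifferentialInequality

variable {t₀ t₁ : ℝ} {f f' k : ℝ → ℝ}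

theorem monotoneOn_exp_mul_of_nonneg_deriv_add_mul {K : ℝ → ℝ}
    (hK : ContinuousOn K (Icc t₀ t₁)) (hK' : ∀ t ∈ Ioo t₀ t₁, HasDerivAt K (k t) t)
    (hf : ContinuousOn f (Icc t₀ t₁)) (hf' : ∀ t ∈ Ioo t₀ t₁, HasDerivAt f (f' t) t)
    (hnonneg : ∀ t ∈ Ioo t₀ t₁, 0 ≤ f' t + k t * f t) :
    MonotoneOn (fun t ↦ Real.exp (K t) * f t) (Icc t₀ t₁) := by
  have hderiv : ∀ t ∈ Ioo t₀ t₁,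
      HasDerivAt (fun t ↦ Real.exp (K t) * f t) (Real.exp (K t) * (f' t + k t * f t)) t :=
    fun t ht ↦ ((hK' t ht).exp.mul (hf' t ht)).congr_deriv (by ring)
  rw [← interior_Icc] at hderiv hnonneg
  exact monotoneOn_of_hasDerivWithinAt_nonneg (convex_Icc t₀ t₁) (hK.rexp.mul hf)
    (fun t ht ↦ (hderiv t ht).hasDerivWithinAt)
    (fun t ht ↦ mul_nonneg (Real.exp_pos _).le (hnonneg t ht))

theorem nonneg_of_nonneg_deriv_add_mul (hk : ContinuousOn k (Icc t₀ t₁))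
    (hf : ContinuousOn f (Icc t₀ t₁)) (hf' : ∀ t ∈ Ioo t₀ t₁, HasDerivAt f (f' t) t)
    (hnonneg : ∀ t ∈ Ioo t₀ t₁, 0 ≤ f' t + k t * f t) (hf₀ : 0 ≤ f t₀) :
    ∀ t ∈ Icc t₀ t₁, 0 ≤ f t := by
  intro t ht
  have hle : t₀ ≤ t₁ := ht.1.trans ht.2
  have hprimitive : ContinuousOn (fun r ↦ ∫ s in t₀..r, k s) (Icc t₀ t₁) := by
    rw [← uIcc_of_le hle] at hk ⊢
    exact intervalIntegral.continuousOn_primitive_interval (hk.integrableOn_compact isCompact_uIcc)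
  have hmono := monotoneOn_exp_mul_of_nonneg_deriv_add_mul hprimitive
    (fun _ ↦ hasDerivAt_integral_of_continuousOn_Icc hk) hf hf' hnonneg
  refine nonneg_of_mul_nonneg_right ?_ (Real.exp_pos (∫ s in t₀..t, k s))
  calc 0 ≤ Real.exp (∫ s in t₀..t₀, k s) * f t₀ := mul_nonneg (Real.exp_pos _).le hf₀
    _ ≤ Real.exp (∫ s in t₀..t, k s) * f t := hmono (left_mem_Icc.2 hle) ht ht.1

end LinearDifferentialInequality

theorem riccati_identity_of_energy_balance {F : Type*} [Field F] [NeZero (2 : F)]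
    {μ γ a p p' : F} (hμ : μ ≠ 0) (henergy : p' + γ * a * p = μ * (γ - 1) * a ^ 2) :
    p' + 1 / μ * (p - (γ - 2) / 2 * (μ * a - p)) ^ 2 =
      γ ^ 2 / (4 * μ) * (μ * a - p) ^ 2 := by
  have h4 : (4 : F) = 2 ^ 2 := by norm_num
  rw [eq_sub_of_add_eq henergy, h4]
  field_simp
  ring

theorem pressure_deriv_le_flux_sq {F : Type*} [Field F] [LinearOrder F] [IsStrictOrderedRing F]
    {μ γ a p p' : F} (hμ : 0 < μ) (henergy : p' + γ * a * p = μ * (γ - 1) * a ^ 2) :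
    p' ≤ γ ^ 2 / (4 * μ) * (μ * a - p) ^ 2 := by
  rw [← riccati_identity_of_energy_balance hμ.ne' henergy]
  exact le_add_of_nonneg_right (by positivity)

section ParticlePath

variable {t₀ t₁ μ γ : ℝ} {a p p' : ℝ → ℝ}

theorem pressure_nonneg (hμ : 0 ≤ μ) (hγ : 1 ≤ γ) (ha : ContinuousOn a (Icc t₀ t₁))
    (hp : ContinuousOn p (Icc t₀ t₁)) (hp' : ∀ t ∈ Ioo t₀ t₁, HasDerivAt p (p' t) t)
    (henergy : ∀ t ∈ Ioo t₀ t₁, p' t + γ * a t * p t = μ * (γ - 1) * a t ^ 2)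
    (hp₀ : 0 ≤ p t₀) : ∀ t ∈ Icc t₀ t₁, 0 ≤ p t := by
  refine nonneg_of_nonneg_deriv_add_mul (ha.const_mul γ) hp hp' (fun t ht ↦ ?_) hp₀
  rw [henergy t ht]
  exact mul_nonneg (mul_nonneg hμ (sub_nonneg.2 hγ)) (sq_nonneg (a t))

theorem pressure_le_add_integral_flux_sq (hμ : 0 < μ) (ha : ContinuousOn a (Icc t₀ t₁))
    (hp : ContinuousOn p (Icc t₀ t₁)) (hp' : ∀ t ∈ Ioo t₀ t₁, HasDerivAt p (p' t) t)
    (henergy : ∀ t ∈ Ioo t₀ t₁, p' t + γ * a t * p t = μ * (γ - 1) * a t ^ 2) :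
    ∀ t ∈ Icc t₀ t₁,
      p t ≤ p t₀ + γ ^ 2 / (4 * μ) * ∫ s in t₀..t, (μ * a s - p s) ^ 2 := by
  intro t ht
  have hIcc : Icc t₀ t ⊆ Icc t₀ t₁ := Icc_subset_Icc_right ht.2
  have hIoo : Ioo t₀ t ⊆ Ioo t₀ t₁ := Ioo_subset_Ioo_right ht.2
  have hflux : ContinuousOn (fun s ↦ γ ^ 2 / (4 * μ) * (μ * a s - p s) ^ 2) (Icc t₀ t₁) :=
    (((ha.const_mul μ).sub hp).pow 2).const_mul _
  rw [← sub_le_iff_le_add', ← intervalIntegral.integral_const_mul]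
  exact intervalIntegral.sub_le_integral_of_hasDeriv_right_of_le ht.1 (hp.mono hIcc)
    (fun s hs ↦ (hp' s (hIoo hs)).hasDerivWithinAt) (hflux.mono hIcc).integrableOn_Icc
    (fun s hs ↦ pressure_deriv_le_flux_sq hμ (henergy s (hIoo hs)))

theorem pressure_two_sided_bound_general (hμ : 0 < μ) (hγ : 1 ≤ γ)
    (ha : ContinuousOn a (Icc t₀ t₁)) (hp : ContinuousOn p (Icc t₀ t₁))
    (hp' : ∀ t ∈ Ioo t₀ t₁, HasDerivAt p (p' t) t)
    (henergy : ∀ t ∈ Ioo t₀ t₁, p' t + γ * a t * p t = μ * (γ - 1) * a t ^ 2)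
    (hp₀ : 0 ≤ p t₀) :
    ∀ t ∈ Icc t₀ t₁,
      0 ≤ p t ∧ p t ≤ p t₀ + γ ^ 2 / (4 * μ) * ∫ s in t₀..t, (μ * a s - p s) ^ 2 :=
  fun t ht ↦ ⟨pressure_nonneg hμ.le hγ ha hp hp' henergy hp₀ t ht,
    pressure_le_add_integral_flux_sq hμ ha hp hp' henergy t ht⟩

end ParticlePath

namespace ClassicalSolution

variable {L T μ γ y : ℝ} {ρ₀ : ℝ → ℝ} {J v π Jt vy vt w πy πt : ℝ → ℝ → ℝ}

theorem continuousOn_pressure (hsol : ClassicalSolution L T μ γ ρ₀ J v π Jt vy vt w πy πt)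
    (hy : y ∈ Icc 0 L) : ContinuousOn (π y) (Icc 0 T) :=
  hsol.contPi.uncurry_left y hy

theorem continuousOn_strainRate (hsol : ClassicalSolution L T μ γ ρ₀ J v π Jt vy vt w πy πt)
    (hy : y ∈ Icc 0 L) : ContinuousOn (fun t ↦ vy y t / J y t) (Icc 0 T) :=
  (hsol.contvy.uncurry_left y hy).div (hsol.contJ.uncurry_left y hy)
    fun t ht ↦ (hsol.Jpos y hy t ht).ne'

theorem hasDerivAt_pressure (hsol : ClassicalSolution L T μ γ ρ₀ J v π Jt vy vt w πy πt)
    (hy : y ∈ Icc 0 L) {t : ℝ} (ht : t ∈ Ioo 0 T) : HasDerivAt (π y) (πt y t) t :=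
  (hsol.hPit y hy t (Ioo_subset_Icc_self ht)).hasDerivAt (Icc_mem_nhds ht.1 ht.2)

end ClassicalSolution

/-- (Pointwise two-sided pressure bound, core of Proposition 2.5.)
For a classical solution with `π(·,0) = π₀ ≥ 0`, and `G = μ(∂_y v)/J - π`,
`0 ≤ π(y,t) ≤ π₀(y) + (γ²/(4μ)) ∫₀ᵗ G(y,s)² ds`. -/
theorem pressure_two_sided_bound
    (L T μ γ : ℝ) (hL : 0 < L) (hT : 0 < T) (hμ : 0 < μ) (hγ : 1 < γ)
    (ρ₀ : ℝ → ℝ) (hρ₀ : ContinuousOn ρ₀ (Icc 0 L))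
    (J v π Jt vy vt w πy πt : ℝ → ℝ → ℝ)
    (hsol : ClassicalSolution L T μ γ ρ₀ J v π Jt vy vt w πy πt)
    (hπ₀ : ∀ y ∈ Icc (0:ℝ) L, 0 ≤ π y 0) :
    ∀ y ∈ Icc (0:ℝ) L, ∀ t ∈ Icc (0:ℝ) T,
      0 ≤ π y t ∧
      π y t ≤ π y 0
        + (γ ^ 2 / (4 * μ)) * ∫ s in (0:ℝ)..t, (μ * vy y s / J y s - π y s) ^ 2 := by
  intro y hy
  simpa only [mul_div_assoc] using pressure_two_sided_bound_general hμ hγ.le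
    (hsol.continuousOn_strainRate hy) (hsol.continuousOn_pressure hy)
    (fun _ ↦ hsol.hasDerivAt_pressure hy)
    (fun t ht ↦ hsol.eq3 y hy t (Ioo_subset_Icc_self ht)) (hπ₀ y hy)
end
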